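/- Let 1 ≤ k < 2.5 and define the real sequence (a_i) by a₁ = (2k+7)/12 and a_{i+1} = k(a_i − 1)/2 + (2k+3)/8. Then: (i) (2k+1)/6 < a₁ < 1 and a₁ > 1/3; (ii) for every i with a_i ≥ 1/3 one has a_{i+1} + k(1 − a_i)/2 > (2k+1)/6 and a_i − a_{i+1} ≥ min(1/8, 1/24, (k+1)(2.5−k)/12) > 0; (iii) consequently there exists m ≥ 2 such that a₁ > a₂ > ⋯ > a_{m−1} ≥ 1/3 > a_m. -/

import Mathlib

/-- properties of the recursively defined exponent sequence
`a₁ = (2k+7)/12`, `a_{i+1} = k(a_i - 1)/2 + (2k+3)/8`, for `1 ≤ k < 2.5`. -/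
theorem exponent_sequence_properties
    (k : ℝ) (hk1 : 1 ≤ k) (hk2 : k < 5/2)
    (a : ℕ → ℝ)
    (ha1 : a 1 = (2*k+7)/12)
    (harec : ∀ i : ℕ, 1 ≤ i → a (i+1) = k * (a i - 1) / 2 + (2*k+3)/8) :
    -- (i)
    ((2*k+1)/6 < a 1 ∧ a 1 < 1 ∧ 1/3 < a 1) ∧
    -- (ii)
    (∀ i : ℕ, 1 ≤ i → 1/3 ≤ a i →
      a (i+1) + k * (1 - a i) / 2 > (2*k+1)/6 ∧
      a i - a (i+1) ≥ min (min (1/8) (1/24)) ((k+1) * (5/2 - k) / 12)) ∧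
    (0 < min (min (1/8 : ℝ) (1/24)) ((k+1) * (5/2 - k) / 12)) ∧
    -- (iii)
    (∃ m : ℕ, 2 ≤ m ∧ (∀ i : ℕ, 1 ≤ i → i < m - 1 → a (i+1) < a i) ∧
      1/3 ≤ a (m - 1) ∧ a m < 1/3) := by
  have hpos : 0 < min (min (1/8 : ℝ) (1/24)) ((k+1) * (5/2 - k) / 12) := by
    have h : 0 < (k+1) * (5/2 - k) := mul_pos (by linarith) (by linarith)
    refine lt_min (lt_min (by norm_num) (by norm_num)) (by linarith)
  have hmono : ∀ i : ℕ, 1 ≤ i → a (i+1) ≤ a i := by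
    intro i hi
    induction i, hi using Nat.le_induction with
    | base =>
      rw [harec 1 le_rfl, ha1]
      have h : 0 < (k+1) * (5/2 - k) := mul_pos (by linarith) (by linarith)
      nlinarith
    | succ n hn ih =>
      rw [harec (n+1) (by omega)]
      have h2 := harec n hn
      have h3 : 0 ≤ k * (a n - a (n+1)) := mul_nonneg (by linarith) (by linarith)
      linarith
  have hle : ∀ i : ℕ, 1 ≤ i → a i ≤ a 1 := by
    intro i hi
    induction i, hi using Nat.le_induction with
    | base => exact le_rfl
    | succ n hn ih => exact (hmono n hn).trans ih
  have hii : ∀ i : ℕ, 1 ≤ i → 1/3 ≤ a i →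
      a (i+1) + k * (1 - a i) / 2 > (2*k+1)/6 ∧
      a i - a (i+1) ≥ min (min (1/8) (1/24)) ((k+1) * (5/2 - k) / 12) := by
    intro i hi h13
    rw [harec i hi]
    refine ⟨by linarith, ?_⟩
    rcases le_total k 2 with h | h
    · refine ((min_le_left _ _).trans (min_le_right _ _)).trans ?_
      have := mul_nonneg (sub_nonneg.2 h) (sub_nonneg.2 h13)
      linarith
    · refine (min_le_right _ _).trans ?_
      have h1 := hle i hi
      rw [ha1] at h1
      have := mul_nonneg (sub_nonneg.2 h) (sub_nonneg.2 h1)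
      linarith
  have h11 : 1/3 < a 1 := by rw [ha1]; linarith
  refine ⟨⟨by rw [ha1]; linarith, by rw [ha1]; linarith, h11⟩, hii, hpos, ?_⟩
  generalize min (min (1/8 : ℝ) (1/24)) ((k+1) * (5/2 - k) / 12) = d at hpos hii
  have hex : ∃ m : ℕ, 1 ≤ m ∧ a m < 1/3 := by
    by_contra! hcon
    have hlin : ∀ n : ℕ, a (n+1) ≤ a 1 - n * d := by
      intro n
      induction n with
      | zero => simp
      | succ n ih =>
        have := (hii (n+1) (by omega) (hcon _ (by omega))).2
        push_cast
        linarith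
    obtain ⟨n, hn⟩ := exists_nat_gt (a 1 / d)
    rw [div_lt_iff₀ hpos] at hn
    have h1 := hlin n
    have h2 := hcon (n+1) (by omega)
    linarith
  classical
  obtain ⟨hm1, hm⟩ := Nat.find_spec hex
  have hmin : ∀ i, 1 ≤ i → i < Nat.find hex → 1/3 ≤ a i := by
    intro i hi hlt
    by_contra! hc
    exact Nat.find_min hex hlt ⟨hi, hc⟩
  generalize Nat.find hex = m at hm1 hm hmin
  have hm2 : 2 ≤ m := by
    by_contra! hc
    have : m = 1 := by omega
    subst this
    linarith
  refine ⟨m, hm2, ?_, hmin _ (by omega) (by omega), hm⟩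
  intro i hi hlt
  have := (hii i hi (hmin i hi (by omega))).2
  linarith
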